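/- Let A be the 5×5 real lower-triangular matrix with diagonal entries all equal to 1/4 and strictly lower entries A(2,1) = 1/2; A(3,1) = 17/50, A(3,2) = -1/25; A(4,1) = 371/1360, A(4,2) = -137/2720, A(4,3) = 15/544; A(5,1) = 25/24, A(5,2) = -49/48, A(5,3) = 125/16, A(5,4) = -85/12 (all other off-diagonal entries zero), and let b = (25/24, -49/48, 125/16, -85/12, 1/4) be its last row. Define, for real x with (1 - x•A) invertible, R(x) = 1 + x * (b ⬝ᵥ ((1 - x•A)⁻¹.mulVec (fun _ => 1))). Then R(x) tends to 0 as x → -∞. -/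

import Mathlib

/-!
For a stiffly accurate method, the row of `(I - zA) v = 𝟙` that carries the weights `b` reads
`vᵢ - z bᵀv = 1`, so that `R(z) = vᵢ`. Writing `(I - zA)⁻¹ = z⁻¹ (z⁻¹ I - A)⁻¹`, the second factor
converges to `(-A)⁻¹` as `z → ∞` whenever `A` is nonsingular, and the first one sends the product
to zero.
-/

open Filter Matrix

/-- The Butcher matrix of the five-stage fourth-order SDIRK54 scheme of Hairer–Wanner. -/
noncomputable def sdirk54A : Matrix (Fin 5) (Fin 5) ℝ :=
  !![1/4,       0,         0,      0,      0;
     1/2,       1/4,       0,      0,      0;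
     17/50,     -1/25,     1/4,    0,      0;
     371/1360,  -137/2720, 15/544, 1/4,    0;
     25/24,     -49/48,    125/16, -85/12, 1/4]

/-- The weight vector of the SDIRK54 scheme (equal to the last row of the Butcher matrix,
so the method is stiffly accurate). -/
noncomputable def sdirk54b : Fin 5 → ℝ :=
  ![25/24, -49/48, 125/16, -85/12, 1/4]

open Bornology Topology

section InverseAtInfinity

theorem one_sub_smul_eq_smul_inv_smul_one_sub {K R : Type*} [DivisionRing K] [Ring R] [Module K R]
    (a : R) {z : K} (hz : z ≠ 0) : 1 - z • a = z • (z⁻¹ • 1 - a) := by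
  rw [smul_sub, smul_inv_smul₀ hz]

theorem tendsto_inv_smul_one_sub_cobounded (𝕜 : Type*) {R : Type*} [NormedDivisionRing 𝕜]
    [Ring R] [TopologicalSpace R] [ContinuousSub R] [Module 𝕜 R] [ContinuousSMul 𝕜 R] (a : R) :
    Tendsto (fun z : 𝕜 => z⁻¹ • 1 - a) (cobounded 𝕜) (𝓝 (-a)) := by
  have hlim : Tendsto (fun z : 𝕜 => z⁻¹ • (1 : R) - a) (cobounded 𝕜) (𝓝 ((0 : 𝕜) • 1 - a)) :=
    (tendsto_inv₀_cobounded.smul_const 1).sub_const a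
  rwa [zero_smul, zero_sub] at hlim

variable {n 𝕜 : Type*} [Fintype n] [DecidableEq n] [NormedField 𝕜] {A : Matrix n n 𝕜}

theorem eventually_isUnit_det_inv_smul_one_sub (hA : IsUnit A) :
    ∀ᶠ z in cobounded 𝕜, IsUnit (z⁻¹ • 1 - A).det := by
  have hdet : (-A).det ≠ 0 := ((isUnit_iff_isUnit_det _).mp hA.neg).ne_zero
  have hlim :=
    (continuous_id.matrix_det.tendsto (-A)).comp (tendsto_inv_smul_one_sub_cobounded 𝕜 A)
  exact (hlim.eventually_ne hdet).mono fun _ => Ne.isUnit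

theorem eventually_isUnit_det_one_sub_smul (hA : IsUnit A) :
    ∀ᶠ z in cobounded 𝕜, IsUnit (1 - z • A).det := by
  filter_upwards [eventually_isUnit_det_inv_smul_one_sub hA, eventually_ne_cobounded 0]
    with z hdet hz
  rw [one_sub_smul_eq_smul_inv_smul_one_sub A hz, det_smul]
  exact (hz.isUnit.pow _).mul hdet

theorem tendsto_inv_one_sub_smul_cobounded (hA : IsUnit A) :
    Tendsto (fun z : 𝕜 => (1 - z • A)⁻¹) (cobounded 𝕜) (𝓝 0) := by
  have hdet : (-A).det ≠ 0 := ((isUnit_iff_isUnit_det _).mp hA.neg).ne_zero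
  have hinv : ContinuousAt Inv.inv (-A) :=
    continuousAt_matrix_inv _ (by simpa only [Ring.inverse_eq_inv'] using continuousAt_inv₀ hdet)
  have hlim : Tendsto (fun z : 𝕜 => z⁻¹ • (z⁻¹ • 1 - A)⁻¹) (cobounded 𝕜) (𝓝 0) := by
    simpa only [zero_smul, Function.comp_apply] using
      tendsto_inv₀_cobounded.smul (hinv.tendsto.comp (tendsto_inv_smul_one_sub_cobounded 𝕜 A))
  refine hlim.congr' ?_
  filter_upwards [eventually_isUnit_det_inv_smul_one_sub hA, eventually_ne_cobounded 0]
    with z hdet hz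
  rw [one_sub_smul_eq_smul_inv_smul_one_sub A hz]
  exact (inv_smul' _ (Units.mk0 z hz) hdet).symm

end InverseAtInfinity

section StabilityFunction

variable {n : Type*} [Fintype n] [DecidableEq n]

/-- The stability function `R(z) = 1 + z bᵀ (I - zA)⁻¹ 𝟙` of the Runge–Kutta method with Butcher
matrix `A` and weights `b`. It takes the junk value `1` where `I - zA` is singular. -/
noncomputable def stabilityFunction {R : Type*} [CommRing R] (A : Matrix n n R) (b : n → R)
    (z : R) : R :=
  1 + z * (b ⬝ᵥ ((1 - z • A)⁻¹ *ᵥ fun _ => 1))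

theorem stabilityFunction_row {R : Type*} [CommRing R] (A : Matrix n n R) (i : n) {z : R}
    (hz : IsUnit (1 - z • A).det) :
    stabilityFunction A (A.row i) z = ((1 - z • A)⁻¹ *ᵥ fun _ => 1) i := by
  set v : n → R := (1 - z • A)⁻¹ *ᵥ fun _ => 1 with hv
  have stage_system : (1 - z • A) *ᵥ v = fun _ => 1 := by
    rw [hv, mulVec_mulVec, mul_nonsing_inv _ hz, one_mulVec]
  have stage_equation : v i - z * (A.row i ⬝ᵥ v) = 1 := by
    rw [sub_mulVec, one_mulVec, smul_mulVec] at stage_system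
    exact congrFun stage_system i
  exact (sub_eq_iff_eq_add.mp stage_equation).symm

theorem tendsto_stabilityFunction_row_cobounded {𝕜 : Type*} [NormedField 𝕜]
    {A : Matrix n n 𝕜} (hA : IsUnit A) (i : n) :
    Tendsto (stabilityFunction A (A.row i)) (cobounded 𝕜) (𝓝 0) := by
  have hstage : Tendsto (fun z : 𝕜 => ((1 - z • A)⁻¹ *ᵥ fun _ => 1) i) (cobounded 𝕜) (𝓝 0) := by
    have hcont : Continuous fun M : Matrix n n 𝕜 => (M *ᵥ fun _ => 1) i :=
      (continuous_apply i).comp (continuous_id.matrix_mulVec continuous_const)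
    simpa only [zero_mulVec, Pi.zero_apply, Function.comp_def] using
      (hcont.tendsto 0).comp (tendsto_inv_one_sub_smul_cobounded hA)
  exact hstage.congr' <| (eventually_isUnit_det_one_sub_smul hA).mono fun _ hz =>
    (stabilityFunction_row A i hz).symm

end StabilityFunction

theorem sdirk54A_isLowerTriangular : sdirk54A.IsLowerTriangular := by
  intro i j hij
  -- `IsLowerTriangular` compares indices in the order dual.
  replace hij : i < j := hij
  fin_cases i <;> fin_cases j <;> simp [sdirk54A] at hij ⊢

theorem isUnit_sdirk54A : IsUnit sdirk54A := by
  have hdiag : ∀ i, sdirk54A i i = 1 / 4 := by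
    intro i
    fin_cases i <;> rfl
  rw [isUnit_iff_isUnit_det, det_of_isLowerTriangular _ sdirk54A_isLowerTriangular]
  simp [hdiag]

theorem sdirk54A_row_last : sdirk54A.row 4 = sdirk54b := rfl

/-- L-stability limit of the SDIRK54 scheme: its stability function
`R(x) = 1 + x bᵀ (I - xA)⁻¹ 𝟙` tends to `0` as `x → -∞`. -/
theorem sdirk54_stability_function_tendsto_zero :
    Tendsto
      (fun x : ℝ => 1 + x * (sdirk54b ⬝ᵥ ((1 - x • sdirk54A)⁻¹.mulVec fun _ => 1)))
      atBot (nhds 0) := by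
  have hlim := tendsto_stabilityFunction_row_cobounded isUnit_sdirk54A 4
  rw [sdirk54A_row_last] at hlim
  exact hlim.mono_left IsOrderBornology.atBot_le_cobounded
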